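/- arXiv:1710.01108 — 2 statements merged into one kernel-verified Lean document; each statement's English description precedes it below -/
import Mathlib

section
/- Let f, g : I → ℝ be continuous and strictly monotone. Then A^[f] ≤ A^[g] (comparison for every n ≥ 1 and every a ∈ Iⁿ) holds if and only if there exists a single k ≥ 2 such that A^[f](a) ≤ A^[g](a) for all a ∈ I^k. -/
/-!
The mean `qam I f` does not change when `f` is replaced by `-f`, so both generators may be taken
strictly increasing. Put `φ = g ∘ f⁻¹` on the interval `f '' I`. Then `qam I f a ≤ qam I g a` is
exactly Jensen's inequality `φ ((∑ uᵢ) / n) ≤ (∑ φ uᵢ) / n` for `uᵢ = f (aᵢ)`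
(`qam_le_iff_jensen`). If it holds for all `k`-tuples with one `k ≥ 2`, then evaluating it at
`(p, q, …, q)` and using the continuity of `φ` shows that `φ` is convex (`convexOn_of_two_point`),
and finite Jensen gives the inequality for every `n`.

Convexity from the two-point inequality is a maximum principle: if `φ` exceeded a chord, look at
the leftmost point `z` where the difference `h` between `φ` and the chord attains its maximum.
Since `z` is a weighted average of a point `p < z` and a point `q > z`, and `h p < h z`,
`h q ≤ h z`, the inequality fails at `z`.
-/

open Set Function Filter

/-- The quasi-arithmetic mean generated by `f` on the interval `I`,
applied to a vector `a ∈ Iⁿ`: `f⁻¹((f a₁ + ⋯ + f aₙ)/n)`, where the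
inverse of `f` is taken on `I`. -/
noncomputable def qam (I : Set ℝ) (f : ℝ → ℝ) {n : ℕ} (a : Fin n → ℝ) : ℝ :=
  Function.invFunOn f I ((∑ i, f (a i)) / n)

/-- The natural (pointwise) partial order on quasi-arithmetic means:
`A^[f] ≤ A^[g]` iff `A^[f](a) ≤ A^[g](a)` for every `n ≥ 1` and every `a ∈ Iⁿ`. -/
def qamLE (I : Set ℝ) (f g : ℝ → ℝ) : Prop :=
  ∀ n : ℕ, 1 ≤ n → ∀ a : Fin n → ℝ, (∀ i, a i ∈ I) → qam I f a ≤ qam I g a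

/-- `A^[f] = A^[g]` : equality of the two quasi-arithmetic means as means. -/
def qamEQ (I : Set ℝ) (f g : ℝ → ℝ) : Prop :=
  ∀ n : ℕ, 1 ≤ n → ∀ a : Fin n → ℝ, (∀ i, a i ∈ I) → qam I f a = qam I g a

/-- `f` is strictly monotone on `I` (strictly increasing or strictly decreasing). -/
def StrictMonoOrAntiOn (f : ℝ → ℝ) (I : Set ℝ) : Prop :=
  StrictMonoOn f I ∨ StrictAntiOn f I

/-- A continuous function on an interval that satisfies the convexity inequality for one fixed
pair of weights `1 / (j + 1)`, `j / (j + 1)` is convex. -/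
theorem convexOn_of_two_point {J : Set ℝ} (hJ : Convex ℝ J) {φ : ℝ → ℝ} (hφ : ContinuousOn φ J)
    {j : ℝ} (hj : 0 < j)
    (h2 : ∀ p ∈ J, ∀ q ∈ J, φ ((p + j * q) / (j + 1)) ≤ (φ p + j * φ q) / (j + 1)) :
    ConvexOn ℝ J φ := by
  refine LinearOrder.convexOn_of_lt hJ ?_
  intro x hx y hy hxy a b ha hb hab
  by_contra! hcon
  simp only [smul_eq_mul] at hcon
  have hsub : Icc x y ⊆ J := hJ.ordConnected.out hx hy
  obtain ⟨s, hs⟩ : ∃ s : ℝ, s * (y - x) = φ y - φ x :=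
    ⟨(φ y - φ x) / (y - x), div_mul_cancel₀ _ (sub_pos.2 hxy).ne'⟩
  -- `h` is the difference between `φ` and its chord over `[x, y]`
  set h : ℝ → ℝ := fun t => φ t - (φ x + s * (t - x)) with hh
  have hhc : ContinuousOn h (Icc x y) := by
    have := hφ.mono hsub
    fun_prop
  obtain ⟨m, hm, hmax⟩ := isCompact_Icc.exists_isMaxOn (nonempty_Icc.2 hxy.le) hhc
  -- `z` is the leftmost maximum point of `h`
  have hS : IsCompact (Icc x y ∩ h ⁻¹' {h m}) :=
    isCompact_Icc.of_isClosed_subset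
      (hhc.preimage_isClosed_of_isClosed isClosed_Icc isClosed_singleton) inter_subset_left
  obtain ⟨z, ⟨hz, hzm⟩, hleast⟩ := hS.exists_isLeast ⟨m, hm, rfl⟩
  have hzm : h z = h m := hzm
  have hw : a * x + b * y ∈ Icc x y :=
    convex_Icc x y (left_mem_Icc.2 hxy.le) (right_mem_Icc.2 hxy.le) ha.le hb.le hab
  have hpos : 0 < h z := by
    have h1 : h (a * x + b * y) ≤ h m := hmax hw
    have h2 : 0 < h (a * x + b * y) := by
      obtain rfl : a = 1 - b := by linarith
      have : s * ((1 - b) * x + b * y - x) = b * (φ y - φ x) := by rw [← hs]; ring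
      simp only [hh, this]
      linarith
    linarith
  have hzx : x < z := by
    refine lt_of_le_of_ne hz.1 ?_
    rintro rfl
    simp [hh] at hpos
  have hzy : z < y := by
    refine lt_of_le_of_ne hz.2 ?_
    rintro rfl
    simp [hh, hs] at hpos
  -- a step small enough for `z - j * t` and `z + t` to stay in `[x, y]`
  obtain ⟨t, ht, ht1, ht2⟩ : ∃ t : ℝ, 0 < t ∧ j * t ≤ z - x ∧ t ≤ y - z := by
    refine ⟨min ((z - x) / j) (y - z), ?_, ?_, min_le_right _ _⟩
    · exact lt_min (div_pos (by linarith) hj) (by linarith)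
    · rw [mul_comm, ← le_div_iff₀ hj]
      exact min_le_left _ _
  have hjt : 0 < j * t := mul_pos hj ht
  have hp : z - j * t ∈ Icc x y := ⟨by linarith, by linarith⟩
  have hq : z + t ∈ Icc x y := ⟨by linarith, by linarith⟩
  have hhp : h (z - j * t) < h z := by
    refine lt_of_le_of_ne (hzm ▸ hmax hp) fun he => ?_
    have := hleast ⟨hp, he.trans hzm⟩
    linarith
  have hhq : h (z + t) ≤ h z := hzm ▸ hmax hq
  have key := h2 _ (hsub hp) _ (hsub hq)
  rw [show (z - j * t + j * (z + t)) / (j + 1) = z by field_simp; ring,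
    le_div_iff₀ (by linarith)] at key
  simp only [hh] at hhp hhq
  nlinarith [mul_le_mul_of_nonneg_left hhq hj.le]

theorem convex_image_interval {I : Set ℝ} (hI : I.OrdConnected) {f : ℝ → ℝ}
    (hfc : ContinuousOn f I) : Convex ℝ (f '' I) :=
  (hI.isPreconnected.image f hfc).convex

theorem mean_mem {J : Set ℝ} (hJ : Convex ℝ J) {n : ℕ} (hn : 1 ≤ n) {u : Fin n → ℝ}
    (hu : ∀ i, u i ∈ J) : (∑ i, u i) / n ∈ J := by
  have hn' : (n : ℝ) ≠ 0 := by positivity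
  have := hJ.sum_mem (t := Finset.univ) (w := fun _ : Fin n => (n : ℝ)⁻¹) (z := u)
    (fun _ _ => by positivity) (by simp [hn']) (fun i _ => hu i)
  simpa [← Finset.mul_sum, div_eq_inv_mul] using this

/-- For `n ≥ 1` the mean of the `f (a i)` lies in `f '' I`, so `qam` takes no junk value. -/
theorem qam_spec {I : Set ℝ} (hI : I.OrdConnected) {f : ℝ → ℝ} (hfc : ContinuousOn f I)
    {n : ℕ} (hn : 1 ≤ n) {a : Fin n → ℝ} (ha : ∀ i, a i ∈ I) :
    qam I f a ∈ I ∧ f (qam I f a) = (∑ i, f (a i)) / n := by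
  have h := mean_mem (convex_image_interval hI hfc) hn (fun i => mem_image_of_mem f (ha i))
  exact ⟨invFunOn_mem h, invFunOn_eq h⟩

theorem qam_neg {I : Set ℝ} (hI : I.OrdConnected) {f : ℝ → ℝ} (hfc : ContinuousOn f I)
    (hf : InjOn f I) {n : ℕ} (hn : 1 ≤ n) {a : Fin n → ℝ} (ha : ∀ i, a i ∈ I) :
    qam I (-f) a = qam I f a := by
  obtain ⟨h1, h2⟩ := qam_spec hI hfc hn ha
  obtain ⟨h3, h4⟩ := qam_spec hI hfc.neg hn ha
  refine hf h3 h1 ?_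
  simp only [Pi.neg_apply, Finset.sum_neg_distrib, neg_div, neg_inj] at h4
  rw [h2]
  exact h4

/-- Every quasi-arithmetic mean has a strictly increasing continuous generator. -/
theorem exists_strictMonoOn_generator {I : Set ℝ} (hI : I.OrdConnected) {f : ℝ → ℝ}
    (hfc : ContinuousOn f I) (hf : StrictMonoOrAntiOn f I) :
    ∃ f' : ℝ → ℝ, ContinuousOn f' I ∧ StrictMonoOn f' I ∧
      ∀ n : ℕ, 1 ≤ n → ∀ a : Fin n → ℝ, (∀ i, a i ∈ I) → qam I f a = qam I f' a := by
  rcases hf with h | h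
  · exact ⟨f, hfc, h, fun _ _ _ _ => rfl⟩
  · exact ⟨-f, hfc.neg, h.neg, fun n hn a ha => (qam_neg hI hfc h.injOn hn ha).symm⟩

theorem continuousOn_invFunOn {I : Set ℝ} (hI : I.OrdConnected) {f : ℝ → ℝ}
    (hfc : ContinuousOn f I) (hf : StrictMonoOn f I) :
    ContinuousOn (invFunOn f I) (f '' I) := by
  have : (f '' I).OrdConnected := (convex_image_interval hI hfc).ordConnected
  rw [continuousOn_iff_continuous_domRestrict]
  -- `f` is an order isomorphism between two intervals, hence a homeomorphism
  have hc := continuous_subtype_val.comp (hf.orderIso f I).symm.continuous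
  convert hc using 1
  ext u
  obtain ⟨x, rfl⟩ := (hf.orderIso f I).surjective u
  have h : invFunOn f I ((hf.orderIso f I) x : ℝ) = x := hf.injOn.leftInvOn_invFunOn x.2
  simpa using h

/-- Comparison of two means at `a` is Jensen's inequality for `g ∘ f⁻¹` at the point `f ∘ a`. -/
theorem qam_le_iff_jensen {I : Set ℝ} (hI : I.OrdConnected) {f g : ℝ → ℝ}
    (hfc : ContinuousOn f I) (hgc : ContinuousOn g I) (hf : StrictMonoOn f I)
    (hg : StrictMonoOn g I) {n : ℕ} (hn : 1 ≤ n) {a : Fin n → ℝ} (ha : ∀ i, a i ∈ I) :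
    qam I f a ≤ qam I g a ↔
      (g ∘ invFunOn f I) ((∑ i, f (a i)) / n) ≤
        (∑ i, (g ∘ invFunOn f I) (f (a i))) / n := by
  obtain ⟨h1, -⟩ := qam_spec hI hfc hn ha
  obtain ⟨h3, h4⟩ := qam_spec hI hgc hn ha
  rw [← hg.le_iff_le h1 h3, h4]
  have : ∀ i, invFunOn f I (f (a i)) = a i := fun i => hf.injOn.leftInvOn_invFunOn (ha i)
  simp only [comp_apply, this, qam]

/-- `A^[f] ≤ A^[g]` (for all `n ≥ 1`) iff the comparison holds for
some single number of variables `k ≥ 2`. -/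
theorem qam_le_iff_le_for_some_k
    (I : Set ℝ) (hI : I.OrdConnected) (hInontriv : ∃ x ∈ I, ∃ y ∈ I, x < y)
    (f g : ℝ → ℝ) (hfc : ContinuousOn f I) (hgc : ContinuousOn g I)
    (hfm : StrictMonoOrAntiOn f I) (hgm : StrictMonoOrAntiOn g I) :
    qamLE I f g ↔
      ∃ k : ℕ, 2 ≤ k ∧ ∀ a : Fin k → ℝ, (∀ i, a i ∈ I) → qam I f a ≤ qam I g a := by
  obtain ⟨f', hfc', hf', hff'⟩ := exists_strictMonoOn_generator hI hfc hfm
  obtain ⟨g', hgc', hg', hgg'⟩ := exists_strictMonoOn_generator hI hgc hgm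
  refine ⟨fun h => ⟨2, le_rfl, h 2 one_le_two⟩, ?_⟩
  rintro ⟨k, hk, hle⟩
  obtain ⟨j, rfl⟩ : ∃ j, k = j + 1 := ⟨k - 1, by omega⟩
  have hj : (0 : ℝ) < j := by exact_mod_cast (by omega : 0 < j)
  have hconv : ConvexOn ℝ (f' '' I) (g' ∘ invFunOn f' I) := by
    refine convexOn_of_two_point (convex_image_interval hI hfc')
      (hgc'.comp (continuousOn_invFunOn hI hfc' hf') fun u hu => invFunOn_mem hu) hj ?_
    rintro _ ⟨x, hx, rfl⟩ _ ⟨y, hy, rfl⟩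
    let a : Fin (j + 1) → ℝ := Fin.cons x fun _ => y
    have ha : ∀ i, a i ∈ I := Fin.cases hx fun _ => hy
    have h := hle a ha
    rw [hff' _ (by omega) a ha, hgg' _ (by omega) a ha,
      qam_le_iff_jensen hI hfc' hgc' hf' hg' (by omega) ha] at h
    simpa [a, Fin.sum_univ_succ] using h
  intro n hn a ha
  rw [hff' n hn a ha, hgg' n hn a ha, qam_le_iff_jensen hI hfc' hgc' hf' hg' hn ha]
  have hn' : (n : ℝ) ≠ 0 := by positivity
  have := hconv.map_sum_le (t := Finset.univ) (w := fun _ : Fin n => (n : ℝ)⁻¹)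
    (p := fun i => f' (a i)) (fun _ _ => by positivity) (by simp [hn'])
    (fun i _ => mem_image_of_mem f' (ha i))
  simpa only [smul_eq_mul, ← Finset.mul_sum, div_eq_inv_mul] using this
end

section
/- Let x₀ ∈ I with x₀ < sup I, and let f, g, h : I → ℝ be continuous and strictly monotone. Suppose f and g are right-differentiable at x₀ with f'₊(x₀) = 0 and g'₊(x₀) = 0, and that A^[f] ≤ A^[h] ≤ A^[g]. Then h is right-differentiable at x₀ and h'₊(x₀) = 0. (The analogous statement holds for left-sided derivatives at a point x₀ > inf I.) -/
/-!
Up to replacing `f` and `h` by their negatives (which changes neither the means nor the claim), both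
are increasing. Fix `y ∈ I` with `x₀ < y`. For `x ∈ (x₀, y]` put
`t = (f x - f x₀) / (f y - f x₀) ∈ (0, 1]` and choose `n ≥ 1` with `1 / (n + 1) < t ≤ 1 / n`.
The `f`-mean of the vector `(y, x₀, …, x₀)` of length `n` is at least `x`, hence so is its `h`-mean,
i.e. `h x - h x₀ ≤ (h y - h x₀) / n ≤ 2 t (h y - h x₀)`. Thus `h x - h x₀ = O(f x - f x₀)` as
`x → x₀⁺`, and a vanishing right derivative passes from `f` to `h`. (This is the slope inequality
for the convex function `h ∘ f⁻¹`, with a constant `2` that spares a limit over rational weights.)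
-/

open Set Function Filter

/-- The comparison of means on the vectors `(y, x₀, …, x₀)`, stated through the defining equations
of the means. Unlike `qamLE`, it is visibly unchanged when `f` or `h` is negated. -/
def PointMassLE (I : Set ℝ) (x₀ y : ℝ) (f h : ℝ → ℝ) : Prop :=
  ∀ m : ℕ, ∀ p ∈ I, ∀ q ∈ I, f p = (f y + m * f x₀) / (m + 1) →
    h q = (h y + m * h x₀) / (m + 1) → p ≤ q

lemma StrictMonoOrAntiOn.injOn {f : ℝ → ℝ} {I : Set ℝ} (hf : StrictMonoOrAntiOn f I) :
    InjOn f I := by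
  rcases hf with hf | hf
  · exact StrictMonoOn.injOn hf
  · exact StrictAntiOn.injOn hf

lemma qam_cons_eq {I : Set ℝ} {f : ℝ → ℝ} (hf : StrictMonoOrAntiOn f I) {x₀ y p : ℝ} {m : ℕ}
    (hp : p ∈ I) (hfp : f p = (f y + m * f x₀) / (m + 1)) :
    qam I f (Fin.cons y (fun _ => x₀) : Fin (m + 1) → ℝ) = p := by
  have hsum : (∑ i, f ((Fin.cons y (fun _ => x₀) : Fin (m + 1) → ℝ) i)) / ((m + 1 : ℕ) : ℝ)
      = f p := by
    rw [hfp, Fin.sum_univ_succ]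
    simp
  unfold qam
  rw [hsum]
  exact hf.injOn.leftInvOn_invFunOn hp

lemma pointMassLE_of_qamLE {I : Set ℝ} {f h : ℝ → ℝ} {x₀ y : ℝ} (hx₀ : x₀ ∈ I) (hy : y ∈ I)
    (hf : StrictMonoOrAntiOn f I) (hh : StrictMonoOrAntiOn h I) (hle : qamLE I f h) :
    PointMassLE I x₀ y f h := by
  intro m p hp q hq hfp hhq
  have key := hle (m + 1) (by omega) (Fin.cons y (fun _ => x₀)) (by
    intro i
    refine Fin.cases ?_ (fun j => ?_) i
    · simpa using hy
    · simpa using hx₀)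
  rwa [qam_cons_eq hf hp hfp, qam_cons_eq hh hq hhq] at key

lemma exists_eq_average {I : Set ℝ} (hI : I.OrdConnected) {f : ℝ → ℝ} (hfc : ContinuousOn f I)
    (hf : StrictMonoOn f I) {x₀ y : ℝ} (hx₀ : x₀ ∈ I) (hy : y ∈ I) (hxy : x₀ < y) (m : ℕ) :
    ∃ p ∈ I, f p = (f y + m * f x₀) / (m + 1) := by
  have hlt : f x₀ < f y := hf hx₀ hy hxy
  have hm : (0 : ℝ) ≤ m := m.cast_nonneg
  have hsub : Icc x₀ y ⊆ I := hI.out hx₀ hy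
  obtain ⟨p, hp, hfp⟩ := intermediate_value_Icc hxy.le (hfc.mono hsub)
    (show (f y + m * f x₀) / (m + 1) ∈ Icc (f x₀) (f y) by
      constructor
      · rw [le_div_iff₀ (by positivity)]; nlinarith
      · rw [div_le_iff₀ (by positivity)]; nlinarith)
  exact ⟨p, hsub hp, hfp⟩

/-- The slope inequality, up to the factor `2`, for the convex function `h ∘ f⁻¹`. -/
lemma sub_le_two_mul_slope {I : Set ℝ} (hI : I.OrdConnected) {f h : ℝ → ℝ} {x₀ y : ℝ}
    (hx₀ : x₀ ∈ I) (hy : y ∈ I) (hxy : x₀ < y)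
    (hfc : ContinuousOn f I) (hhc : ContinuousOn h I)
    (hf : StrictMonoOn f I) (hh : StrictMonoOn h I) (hle : PointMassLE I x₀ y f h)
    {x : ℝ} (hx : x ∈ Ioc x₀ y) :
    h x - h x₀ ≤ 2 * ((h y - h x₀) / (f y - f x₀)) * (f x - f x₀) := by
  have hxI : x ∈ I := hI.out hx₀ hy ⟨hx.1.le, hx.2⟩
  have hF : 0 < f y - f x₀ := sub_pos.2 (hf hx₀ hy hxy)
  have hH : 0 < h y - h x₀ := sub_pos.2 (hh hx₀ hy hxy)
  have hd : 0 < f x - f x₀ := sub_pos.2 (hf hx₀ hxI hx.1)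
  have hdF : f x - f x₀ ≤ f y - f x₀ := sub_le_sub_right (hf.monotoneOn hxI hy hx.2) _
  -- `m + 1` is the integer part of `1 / t`.
  obtain ⟨m, hm⟩ : ∃ m : ℕ, ⌊(f y - f x₀) / (f x - f x₀)⌋₊ = m + 1 := by
    refine Nat.exists_eq_succ_of_ne_zero (Nat.pos_iff_ne_zero.1 ?_)
    exact Nat.floor_pos.2 ((one_le_div hd).2 hdF)
  have hm1 : (m + 1 : ℝ) * (f x - f x₀) ≤ f y - f x₀ := by
    rw [← le_div_iff₀ hd]
    have := Nat.floor_le (div_pos hF hd).le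
    rw [hm] at this
    exact_mod_cast this
  have hm2 : f y - f x₀ ≤ (m + 2 : ℝ) * (f x - f x₀) := by
    rw [← div_le_iff₀ hd]
    have := (Nat.lt_floor_add_one ((f y - f x₀) / (f x - f x₀))).le
    rw [hm] at this
    push_cast at this
    linarith
  have hm0 : (0 : ℝ) ≤ m := m.cast_nonneg
  have hmp : (0 : ℝ) < m + 1 := by positivity
  obtain ⟨p, hp, hfp⟩ := exists_eq_average hI hfc hf hx₀ hy hxy m
  obtain ⟨q, hq, hhq⟩ := exists_eq_average hI hhc hh hx₀ hy hxy m
  have hpq := hle m p hp q hq hfp hhq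
  have hxp : x ≤ p := by
    rw [← hf.le_iff_le hxI hp, hfp, le_div_iff₀ hmp]
    linarith
  have hhx : h x ≤ h q := hh.monotoneOn hxI hq (hxp.trans hpq)
  rw [hhq, le_div_iff₀ hmp] at hhx
  have h1 : h x - h x₀ ≤ (h y - h x₀) / (m + 1) := by
    rw [le_div_iff₀ hmp]
    linarith
  refine h1.trans ?_
  rw [div_le_iff₀ hmp]
  have h2 : 1 ≤ 2 * (f x - f x₀) / (f y - f x₀) * (m + 1) := by
    rw [div_mul_eq_mul_div, one_le_div hF]
    nlinarith
  calc h y - h x₀ = (h y - h x₀) * 1 := (mul_one _).symm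
    _ ≤ (h y - h x₀) * (2 * (f x - f x₀) / (f y - f x₀) * (m + 1)) := by gcongr
    _ = _ := by ring

lemma hasDerivWithinAt_zero_of_strictMonoOn {I : Set ℝ} (hI : I.OrdConnected) {f h : ℝ → ℝ}
    {x₀ y : ℝ} (hx₀ : x₀ ∈ I) (hy : y ∈ I) (hxy : x₀ < y)
    (hfc : ContinuousOn f I) (hhc : ContinuousOn h I)
    (hf : StrictMonoOn f I) (hh : StrictMonoOn h I) (hle : PointMassLE I x₀ y f h)
    (hfd : HasDerivWithinAt f 0 (Ioi x₀) x₀) : HasDerivWithinAt h 0 (Ioi x₀) x₀ := by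
  rw [hasDerivWithinAt_iff_isLittleO] at hfd ⊢
  simp only [smul_zero, sub_zero] at hfd ⊢
  refine Asymptotics.IsBigO.trans_isLittleO
    (Asymptotics.IsBigO.of_bound (2 * ((h y - h x₀) / (f y - f x₀))) ?_) hfd
  filter_upwards [Ioc_mem_nhdsGT hxy] with x hx
  have hxI : x ∈ I := hI.out hx₀ hy ⟨hx.1.le, hx.2⟩
  rw [Real.norm_of_nonneg (sub_nonneg.2 (hh hx₀ hxI hx.1).le),
    Real.norm_of_nonneg (sub_nonneg.2 (hf hx₀ hxI hx.1).le)]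
  exact sub_le_two_mul_slope hI hx₀ hy hxy hfc hhc hf hh hle hx

lemma PointMassLE.neg_left {I : Set ℝ} {x₀ y : ℝ} {f h : ℝ → ℝ} (hle : PointMassLE I x₀ y f h) :
    PointMassLE I x₀ y (-f) h := by
  intro m p hp q hq hfp hhq
  refine hle m p hp q hq ?_ hhq
  simp only [Pi.neg_apply] at hfp
  rw [← neg_inj, hfp]
  ring

lemma PointMassLE.neg_right {I : Set ℝ} {x₀ y : ℝ} {f h : ℝ → ℝ} (hle : PointMassLE I x₀ y f h) :
    PointMassLE I x₀ y f (-h) := by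
  intro m p hp q hq hfp hhq
  refine hle m p hp q hq hfp ?_
  simp only [Pi.neg_apply] at hhq
  rw [← neg_inj, hhq]
  ring

/-- Corollary 1: if `f, g` are right-differentiable at `x₀` with
vanishing right derivative and `A^[f] ≤ A^[h] ≤ A^[g]`, then `h` is
right-differentiable at `x₀` with `h'₊(x₀) = 0`. -/
theorem right_deriv_zero_interval_type
    (I : Set ℝ) (hI : I.OrdConnected) (hInontriv : ∃ x ∈ I, ∃ y ∈ I, x < y)
    (x₀ : ℝ) (hx₀ : x₀ ∈ I) (hx₀sup : ∃ y ∈ I, x₀ < y)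
    (f g h : ℝ → ℝ)
    (hfc : ContinuousOn f I) (hgc : ContinuousOn g I) (hhc : ContinuousOn h I)
    (hfm : StrictMonoOrAntiOn f I) (hgm : StrictMonoOrAntiOn g I)
    (hhm : StrictMonoOrAntiOn h I)
    (hfd : HasDerivWithinAt f 0 (Ioi x₀) x₀)
    (hgd : HasDerivWithinAt g 0 (Ioi x₀) x₀)
    (hle₁ : qamLE I f h) (hle₂ : qamLE I h g) :
    HasDerivWithinAt h 0 (Ioi x₀) x₀ := by
  obtain ⟨y, hy, hxy⟩ := hx₀sup
  have hle : PointMassLE I x₀ y f h := pointMassLE_of_qamLE hx₀ hy hfm hhm hle₁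
  have hfd' : HasDerivWithinAt (-f) 0 (Ioi x₀) x₀ := by simpa using hfd.neg
  -- Negating a decreasing `f` reduces to increasing `f`, for any increasing comparison function.
  have key : ∀ k : ℝ → ℝ, ContinuousOn k I → StrictMonoOn k I → PointMassLE I x₀ y f k →
      HasDerivWithinAt k 0 (Ioi x₀) x₀ := by
    intro k hkc hk hlek
    rcases hfm with hf | hf
    · exact hasDerivWithinAt_zero_of_strictMonoOn hI hx₀ hy hxy hfc hkc hf hk hlek hfd
    · exact hasDerivWithinAt_zero_of_strictMonoOn hI hx₀ hy hxy hfc.neg hkc hf.neg hk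
        hlek.neg_left hfd'
  rcases hhm with hh | hh
  · exact key h hhc hh hle
  · simpa using (key (-h) hhc.neg hh.neg hle.neg_right).neg
end
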